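/- Let (X,T) be a minimal system and k ≥ 2 an integer. Then (X,T^k) is minimal if and only if N_d(X,T) = N_d(X,T^k) for each d ∈ ℕ. -/

import Mathlib

/-- `N_d(X,T)`: the closure in `X^d` of
`{(T^n x, T^{2n} x, …, T^{dn} x) : x ∈ X, n ∈ ℤ}`, for a bijection `T` of the
metric space `X`. -/
def Nd {X : Type*} [MetricSpace X] (T : Equiv.Perm X) (d : ℕ) : Set (Fin d → X) :=
  closure {f | ∃ x : X, ∃ n : ℤ,
    ∀ i : Fin d, f i = (T ^ (((i : ℕ) + 1 : ℤ) * n)) x}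

/-! If `T ^ k` has dense orbits, then `N_d` of `T` lies in `N_d` of `T ^ k` as soon as every
constant tuple is a limit of progressions `T^(a + i n) x` with `n` in a prescribed class `m` modulo
`k`. To produce these progressions, fix a minimal idempotent `w` of `βℤ` along which the orbit of
`x` returns to `x`. Elements of the form `w + h + w` form a group with identity `w`, and some `f` in
it is concentrated on `m + kℤ` and also returns `x` to `x`. It remains to realize `w, f, 2f, …, df`
by a single ultrafilter on the pairs `(a, n)`, mapped by `a + i n`. Assume this done up to `sf` by a
family `u` with `u (s + 1)` still arbitrary. Differences of `u` form a family on a cube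
of dimension `s + 1` which vanishes at all vertices other than the one opposite to the origin, where
its value is `u (s + 1) - (s + 1)f`. It can be dilated by `(s + 1)!` and made to vanish on all
coordinate hyperplanes; its restriction to a line meeting one hyperplane at each of the times
`0, …, s` is the required correction of `u`.

Conversely, the closure of a `T ^ k`-orbit has an interior point `z`, by Baire; the pairs
`(z, T^n z)` belong to `N_2` of `T`, and if they belong to `N_2` of `T ^ k` then the whole `T`-orbit
of `z` stays in that closure. -/

open Filter Topology

attribute [local instance] Ultrafilter.addSemigroup

/-! ### Minimal idempotents and their local groups -/

/-- An idempotent `w` of a semigroup lying in a minimal left ideal: the left ideal generated by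
`g + w` contains `w` again, for every `g`. -/
structure MinimalIdempotent (S : Type*) [AddSemigroup S] where
  val : S
  add_self : val + val = val
  exists_add_eq (g : S) : ∃ h, h + (g + val) = val

instance {S : Type*} [AddSemigroup S] : CoeOut (MinimalIdempotent S) S :=
  ⟨MinimalIdempotent.val⟩

/-- The local group of a minimal idempotent `w`: the elements for which `w` is a two-sided
identity, a group by minimality of `w`. -/
abbrev LocalGroup {S : Type*} [AddSemigroup S] (w : MinimalIdempotent S) : Type _ :=
  {g : S // w + g = g ∧ g + w = g}

namespace LocalGroup

variable {S : Type*} [AddSemigroup S] {w : MinimalIdempotent S}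

/-- The retraction `g ↦ w + g + w` of the semigroup onto the local group of `w`. -/
def sandwich (w : MinimalIdempotent S) (g : S) : LocalGroup w :=
  ⟨w + g + w, by rw [← add_assoc, ← add_assoc, w.add_self], by rw [add_assoc, w.add_self]⟩

lemma sandwich_coe (g : LocalGroup w) : sandwich w g = g :=
  Subtype.ext (by change (w + g + w : S) = g; rw [g.2.1, g.2.2])

instance : Zero (LocalGroup w) := ⟨w, w.add_self, w.add_self⟩

instance : Add (LocalGroup w) :=
  ⟨fun g h => ⟨g + h, by rw [← add_assoc, g.2.1], by rw [add_assoc, h.2.2]⟩⟩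

lemma coe_add (g h : LocalGroup w) : ((g + h : LocalGroup w) : S) = g + h := rfl

lemma exists_add_eq_zero (g : LocalGroup w) : ∃ r : LocalGroup w, r + g = 0 := by
  obtain ⟨h, hh⟩ := w.exists_add_eq g
  rw [g.2.2] at hh
  refine ⟨sandwich w h, Subtype.ext ?_⟩
  calc (w + h + w + g : S) = w + (h + (w + g)) := by simp only [add_assoc]
    _ = w := by rw [g.2.1, hh, w.add_self]

noncomputable instance : Neg (LocalGroup w) := ⟨fun g => (exists_add_eq_zero g).choose⟩

noncomputable instance : AddGroup (LocalGroup w) :=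
  AddGroup.ofLeftAxioms (fun _ _ _ => Subtype.ext (add_assoc _ _ _))
    (fun g => Subtype.ext g.2.1) (fun g => (exists_add_eq_zero g).choose_spec)

end LocalGroup

section CompactRightTopological

variable {S : Type*} [AddSemigroup S] [TopologicalSpace S] [CompactSpace S] [T2Space S]

lemma exists_forall_exists_add_eq [Nonempty S] (hS : ∀ r : S, Continuous (· + r)) :
    ∃ u : S, ∀ g, ∃ h, h + (g + u) = u := by
  let LeftMultiple (a b : S) : Prop := b ∈ Set.range (· + a)
  have trans {a b c : S} (hab : LeftMultiple a b) (hbc : LeftMultiple b c) : LeftMultiple a c := by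
    obtain ⟨g, rfl⟩ := hab
    obtain ⟨h, rfl⟩ := hbc
    exact ⟨h + g, add_assoc h g a⟩
  have bounded (C : Set S) (hC : IsChain LeftMultiple C) : ∃ b, ∀ a ∈ C, LeftMultiple a b := by
    rcases C.eq_empty_or_nonempty with rfl | hne
    · exact ⟨Classical.arbitrary S, by simp⟩
    have := hne.coe_sort
    have directed : Directed (· ⊇ ·) fun a : C => Set.range (· + (a : S)) := by
      rintro ⟨a, ha⟩ ⟨b, hb⟩
      by_cases hab : a = b
      · subst hab
        exact ⟨⟨a, ha⟩, subset_rfl, subset_rfl⟩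
      rcases hC ha hb hab with h | h
      · exact ⟨⟨b, hb⟩, fun _ => trans h, subset_rfl⟩
      · exact ⟨⟨a, ha⟩, subset_rfl, fun _ => trans h⟩
    obtain ⟨b, hb⟩ := IsCompact.nonempty_iInter_of_directed_nonempty_isCompact_isClosed _ directed
      (fun _ => Set.range_nonempty _) (fun a => isCompact_range (hS a))
      (fun a => (isCompact_range (hS a)).isClosed)
    exact ⟨b, fun a ha => Set.mem_iInter.1 hb ⟨a, ha⟩⟩
  obtain ⟨u, hu⟩ := exists_maximal_of_chains_bounded bounded trans
  exact ⟨u, fun g => hu (g + u) ⟨g, rfl⟩⟩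

lemma exists_minimalIdempotent_mem [Nonempty S] (hS : ∀ r : S, Continuous (· + r)) {K : Set S}
    (hK : IsClosed K) (hadd : ∀ a ∈ K, ∀ b ∈ K, a + b ∈ K)
    (hideal : ∀ u : S, ∃ h, h + u ∈ K) : ∃ w : MinimalIdempotent S, (w : S) ∈ K := by
  obtain ⟨u, hu⟩ := exists_forall_exists_add_eq hS
  have hclosed : IsClosed (Set.range (· + u)) := (isCompact_range (hS u)).isClosed
  obtain ⟨_, ⟨⟨c, rfl⟩, hcK⟩, hidem⟩ := exists_idempotent_in_compact_add_subsemigroup hS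
    (Set.range (· + u) ∩ K) (let ⟨h, hh⟩ := hideal u; ⟨h + u, ⟨h, rfl⟩, hh⟩)
    (hclosed.inter hK).isCompact (by
      rintro a ⟨-, ha⟩ _ ⟨⟨b, rfl⟩, hb⟩
      exact ⟨⟨a + b, add_assoc a b u⟩, hadd a ha _ hb⟩)
  refine ⟨⟨c + u, hidem, fun g => ?_⟩, hcK⟩
  obtain ⟨h, hh⟩ := hu (g + c)
  exact ⟨c + h, by rw [add_assoc c h, ← add_assoc g, hh]⟩

end CompactRightTopological

/-! ### Sums of ultrafilters -/

section UltrafilterSum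

variable {A B : Type*} [AddMonoid A] [AddMonoid B]

lemma ultrafilter_map_add (φ : A →+ B) (U V : Ultrafilter A) :
    (U + V).map φ = U.map φ + V.map φ := by
  refine Ultrafilter.coe_injective (Filter.ext' fun p => ?_)
  simp only [Ultrafilter.coe_map, eventually_map, Ultrafilter.eventually_add, map_add]

lemma ultrafilter_pure_add_pure (a b : A) : (pure a + pure b : Ultrafilter A) = pure (a + b) := by
  refine Ultrafilter.coe_injective (Filter.ext' fun p => ?_)
  simp only [Ultrafilter.eventually_add, Ultrafilter.coe_pure, eventually_pure]

lemma ultrafilter_add_pure_zero (U : Ultrafilter A) : U + pure 0 = U := by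
  refine Ultrafilter.coe_injective (Filter.ext' fun p => ?_)
  simp only [Ultrafilter.eventually_add, Ultrafilter.coe_pure, eventually_pure, add_zero]

end UltrafilterSum

lemma exists_ultrafilter_map_eq {α β : Type*} {φ : α → β} {U : Ultrafilter β}
    (h : ∀ᶠ y in (U : Filter β), y ∈ Set.range φ) : ∃ V : Ultrafilter α, V.map φ = U := by
  have himage : φ '' Set.univ ∈ U := by rwa [Set.image_univ]
  exact ⟨_, Ultrafilter.ofComapInfPrincipal_eq_of_map himage⟩

lemma ultrafilter_map_eq_pure_zero {A F : Type*} [AddMonoid A] [AddGroup F] [Finite F]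
    (φ : A →+ F) {e : Ultrafilter A} (he : e + e = e) : e.map φ = pure 0 := by
  obtain ⟨z, hz⟩ := (e.map φ).eq_pure_of_finite
  have hadd : z + z = z := Ultrafilter.pure_injective <| by
    rw [← ultrafilter_pure_add_pure, ← hz, ← ultrafilter_map_add, he]
  rw [hz, add_eq_left.1 hadd]

lemma eventually_dvd_of_add_self {e : Ultrafilter ℤ} (he : e + e = e) {q : ℤ} (hq : q ≠ 0) :
    ∀ᶠ n in (e : Filter ℤ), q ∣ n := by
  have : NeZero q.natAbs := ⟨Int.natAbs_ne_zero.2 hq⟩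
  have hzero :
      ∀ᶠ r in (e.map (Int.castAddHom (ZMod q.natAbs)) : Filter (ZMod q.natAbs)), r = 0 := by
    rw [ultrafilter_map_eq_pure_zero _ he]
    simp
  filter_upwards [eventually_map.1 hzero] with n hn
  exact Int.natAbs_dvd.1 ((ZMod.intCast_zmod_eq_zero_iff_dvd n _).1 hn)

/-! ### Realizable families -/

section Realizable

variable {A B κ : Type*} [AddMonoid A] [AddMonoid B] {w : MinimalIdempotent (Ultrafilter B)}
  {ℓ : κ → A →+ B}

-- An idempotent of the left ideal generated by `U + β` has, after multiplication by `w` on the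
-- left, idempotent images in the local group of `w`; these images are therefore zero.
lemma exists_ultrafilter_map_eq_neg {β U : Ultrafilter A} (hβ : ∀ i, β.map (ℓ i) = w)
    {x : κ → LocalGroup w} (hU : ∀ i, U.map (ℓ i) = x i) :
    ∃ V : Ultrafilter A, ∀ i, V.map (ℓ i) = (-x i : LocalGroup w) := by
  obtain ⟨_, ⟨b, rfl⟩, hidem⟩ := exists_idempotent_in_compact_add_subsemigroup
    Ultrafilter.continuous_add_left (Set.range (· + (U + β))) (Set.range_nonempty _)
    (isCompact_range (Ultrafilter.continuous_add_left _)) (by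
      rintro a - _ ⟨b, rfl⟩
      exact ⟨a + b, add_assoc a b _⟩)
  refine ⟨β + b + β, fun i => ?_⟩
  have hidem_image : b.map (ℓ i) + x i + (b.map (ℓ i) + x i) = b.map (ℓ i) + x i := by
    simpa only [ultrafilter_map_add, hU, hβ, (x i).2.2]
      using congrArg (Ultrafilter.map (ℓ i)) hidem
  let g := LocalGroup.sandwich w (b.map (ℓ i))
  have hcoe : ((g + x i : LocalGroup w) : Ultrafilter B) = w + (b.map (ℓ i) + x i) := by
    change (w : Ultrafilter B) + b.map (ℓ i) + w + x i = _
    rw [add_assoc, (x i).2.1, add_assoc]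
  have hzero : g + x i = 0 := by
    refine add_eq_left.1 (Subtype.ext ?_ : g + x i + (g + x i) = g + x i)
    have hright : b.map (ℓ i) + x i + w = b.map (ℓ i) + x i := by rw [add_assoc, (x i).2.2]
    rw [LocalGroup.coe_add, hcoe, add_assoc, ← add_assoc (b.map (ℓ i) + (x i : Ultrafilter B)),
      hright, hidem_image]
  rw [← eq_neg_of_add_eq_zero_left hzero, ultrafilter_map_add, ultrafilter_map_add, hβ]
  rfl

/-- The families in the local group of `w` obtained by mapping one ultrafilter under all the
homomorphisms `ℓ i` simultaneously. The hypothesis says that the zero family is one of them. -/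
def realizable (w : MinimalIdempotent (Ultrafilter B)) (ℓ : κ → A →+ B)
    (hℓ : ∃ β : Ultrafilter A, ∀ i, β.map (ℓ i) = w) : AddSubgroup (κ → LocalGroup w) where
  carrier := {x | ∃ U : Ultrafilter A, ∀ i, U.map (ℓ i) = x i}
  zero_mem' := hℓ
  add_mem' := by
    rintro x y ⟨U, hU⟩ ⟨V, hV⟩
    exact ⟨U + V, fun i => by rw [ultrafilter_map_add, hU, hV]; rfl⟩
  neg_mem' := by
    rintro x ⟨U, hU⟩
    obtain ⟨β, hβ⟩ := hℓ
    exact exists_ultrafilter_map_eq_neg hβ hU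

lemma sandwich_mem_realizable (hℓ : ∃ β : Ultrafilter A, ∀ i, β.map (ℓ i) = w)
    (U : Ultrafilter A) :
    (fun i => LocalGroup.sandwich w (U.map (ℓ i))) ∈ realizable w ℓ hℓ := by
  obtain ⟨β, hβ⟩ := hℓ
  exact ⟨β + U + β, fun i => by rw [ultrafilter_map_add, ultrafilter_map_add, hβ]; rfl⟩

lemma comp_mem_realizable {A' κ' : Type*} [AddMonoid A'] {ℓ' : κ' → A' →+ B}
    {hℓ : ∃ β : Ultrafilter A, ∀ i, β.map (ℓ i) = w}
    (hℓ' : ∃ β : Ultrafilter A', ∀ i, β.map (ℓ' i) = w) {x : κ → LocalGroup w}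
    (hx : x ∈ realizable w ℓ hℓ) (φ : A → A') (σ : κ' → κ)
    (hφ : ∀ i a, ℓ' i (φ a) = ℓ (σ i) a) : x ∘ σ ∈ realizable w ℓ' hℓ' := by
  obtain ⟨U, hU⟩ := hx
  refine ⟨U.map φ, fun i => ?_⟩
  rw [Ultrafilter.map_map, (funext (hφ i) : ℓ' i ∘ φ = ℓ (σ i)), hU, Function.comp_apply]

end Realizable

/-! ### Families indexed by progressions and by cubes -/

/-- The coordinate `i` of an arithmetic progression, as a homomorphism in the pair formed by its
origin and its step. -/
def progForm (i : ℤ) : ℤ × ℤ →+ ℤ :=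
  AddMonoidHom.mk' (fun p => p.1 + i * p.2) fun p r => by
    simp only [Prod.fst_add, Prod.snd_add]; ring

/-- The coordinate `c` of an affine cube with sides `p.2`, as a homomorphism in `p`; its origin is
the multiple `q * p.1`, so that the cube can be dilated by `q`. -/
def cubeForm {ι : Type*} [Fintype ι] (q : ℤ) (c : ι → ℤ) : ℤ × (ι → ℤ) →+ ℤ :=
  AddMonoidHom.mk' (fun p => q * p.1 + c ⬝ᵥ p.2) fun p r => by
    simp only [Prod.fst_add, Prod.snd_add, dotProduct_add]; ring

lemma progForm_apply (i : ℤ) (p : ℤ × ℤ) : progForm i p = p.1 + i * p.2 := rfl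

lemma cubeForm_apply {ι : Type*} [Fintype ι] (q : ℤ) (c : ι → ℤ) (p : ℤ × (ι → ℤ)) :
    cubeForm q c p = q * p.1 + c ⬝ᵥ p.2 := rfl

lemma exists_map_progForm_eq (w : MinimalIdempotent (Ultrafilter ℤ)) :
    ∃ β : Ultrafilter (ℤ × ℤ), ∀ i, β.map (progForm i) = w := by
  refine ⟨(w : Ultrafilter ℤ).map fun a => (a, 0), fun i => ?_⟩
  have hid : progForm i ∘ (fun a : ℤ => (a, (0 : ℤ))) = id := by
    funext a
    simp [progForm_apply]
  rw [Ultrafilter.map_map, hid, Ultrafilter.map_id]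

lemma exists_map_cubeForm_eq (ι : Type*) [Fintype ι] (w : MinimalIdempotent (Ultrafilter ℤ))
    {q : ℤ} (hq : q ≠ 0) :
    ∃ β : Ultrafilter (ℤ × (ι → ℤ)), ∀ c, β.map (cubeForm q c) = w := by
  obtain ⟨v, hv⟩ : ∃ v : Ultrafilter ℤ, v.map (q * ·) = w :=
    exists_ultrafilter_map_eq <| (eventually_dvd_of_add_self w.add_self hq).mono
      fun _ ⟨a, ha⟩ => ⟨a, ha.symm⟩
  refine ⟨v.map fun a => (a, 0), fun c => ?_⟩
  have hmul : cubeForm q c ∘ (fun a : ℤ => (a, (0 : ι → ℤ))) = (q * ·) := by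
    funext a
    simp [cubeForm_apply]
  rw [Ultrafilter.map_map, hmul, hv]

/-- The families of elements of the local group of `w` realized along arithmetic progressions. -/
def progFamilies (w : MinimalIdempotent (Ultrafilter ℤ)) : AddSubgroup (ℤ → LocalGroup w) :=
  realizable w progForm (exists_map_progForm_eq w)

/-- The families of elements of the local group of `w` realized along affine cubes with origin
divisible by `q`. -/
def cubeFamilies (ι : Type*) [Fintype ι] (w : MinimalIdempotent (Ultrafilter ℤ)) {q : ℤ}
    (hq : q ≠ 0) : AddSubgroup ((ι → ℤ) → LocalGroup w) :=
  realizable w (cubeForm q) (exists_map_cubeForm_eq ι w hq)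

section Pullback

variable {ι : Type*} [Fintype ι] {w : MinimalIdempotent (Ultrafilter ℤ)} {q : ℤ}

lemma comp_dotProduct_mem_cubeFamilies {x : ℤ → LocalGroup w} (hx : x ∈ progFamilies w)
    (b : ι → ℤ) : (fun c => x (c ⬝ᵥ b)) ∈ cubeFamilies ι w one_ne_zero :=
  comp_mem_realizable _ hx (fun p => (p.1, p.2 • b)) (fun c => c ⬝ᵥ b) fun c p => by
    simp only [cubeForm_apply, progForm_apply, dotProduct_smul, smul_eq_mul]; ring

lemma comp_update_zero_mem_cubeFamilies [DecidableEq ι] {hq : q ≠ 0}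
    {y : (ι → ℤ) → LocalGroup w} (hy : y ∈ cubeFamilies ι w hq) (j : ι) :
    (fun c => y (Function.update c j 0)) ∈ cubeFamilies ι w hq :=
  comp_mem_realizable _ hy (fun p => (p.1, Function.update p.2 j 0))
    (fun c => Function.update c j 0) fun c p => by
      simp only [cubeForm_apply, dotProduct]
      congr 1
      refine Finset.sum_congr rfl fun i _ => ?_
      by_cases h : i = j
      · subst h; simp
      · simp [h]

lemma comp_line_mem_progFamilies {hq : q ≠ 0} {y : (ι → ℤ) → LocalGroup w}
    (hy : y ∈ cubeFamilies ι w hq) (a b : ι → ℤ) :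
    (fun i : ℤ => y (a + i • b)) ∈ progFamilies w :=
  comp_mem_realizable _ hy (fun p => (q * p.1 + a ⬝ᵥ p.2, b ⬝ᵥ p.2)) (fun i => a + i • b)
    fun i p => by
      simp only [cubeForm_apply, progForm_apply, add_dotProduct, smul_dotProduct, smul_eq_mul]
      ring

-- The origin and the sides of the cubes realizing `z` are divisible by `q`, so these cubes are
-- dilations of smaller ones.
lemma exists_mem_cubeFamilies_smul_eq [DecidableEq ι] {z : (ι → ℤ) → LocalGroup w}
    (hz : z ∈ cubeFamilies ι w one_ne_zero) (hzero : z 0 = 0)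
    (hsingle : ∀ j, z (Pi.single j 1) = 0) (hq : q ≠ 0) :
    ∃ y ∈ cubeFamilies ι w hq, ∀ c, y (q • c) = z c := by
  obtain ⟨Q, hQ⟩ := hz
  have hdvd {c : ι → ℤ} (hc : z c = 0) : ∀ᶠ p in (Q : Filter (ℤ × (ι → ℤ))), q ∣ cubeForm 1 c p :=
    eventually_map.1 <| eventually_dvd_of_add_self (e := Q.map (cubeForm 1 c))
      (by rw [hQ, hc]; exact w.add_self) hq
  have hrange : ∀ᶠ p in (Q : Filter (ℤ × (ι → ℤ))),
      p ∈ Set.range fun r : ℤ × (ι → ℤ) => (q * r.1, q • r.2) := by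
    filter_upwards [hdvd hzero, eventually_all.2 fun j => hdvd (hsingle j)] with p hp hpj
    simp only [cubeForm_apply, one_mul, zero_dotProduct, add_zero, single_one_dotProduct] at hp hpj
    obtain ⟨a, ha⟩ := hp
    choose b hb using fun j => (dvd_add_right ⟨a, ha⟩).1 (hpj j)
    exact ⟨(a, b), Prod.ext ha.symm (funext fun j => (hb j).symm)⟩
  obtain ⟨D, rfl⟩ := exists_ultrafilter_map_eq hrange
  refine ⟨_, sandwich_mem_realizable _ D, fun c => ?_⟩
  have hdilate : ⇑(cubeForm q (q • c)) =
      cubeForm 1 c ∘ fun r : ℤ × (ι → ℤ) => (q * r.1, q • r.2) := by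
    funext r
    simp only [cubeForm_apply, Function.comp_apply, smul_dotProduct, dotProduct_smul, one_mul]
  rw [hdilate, ← Ultrafilter.map_map, hQ, LocalGroup.sandwich_coe]

end Pullback

lemma exists_mem_forall_eq_zero_of_faces {ι M G : Type*} [Finite ι] [DecidableEq ι] [Zero M]
    [AddGroup G] {Γ : AddSubgroup ((ι → M) → G)}
    (hΓ : ∀ x ∈ Γ, ∀ j, (fun c => x (Function.update c j 0)) ∈ Γ) {z : (ι → M) → G} (hz : z ∈ Γ)
    {v : ι → M} (hzv : ∀ c, (∀ i, c i = 0 ∨ c i = v i) → (∃ i, c i = 0) → z c = 0) :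
    ∃ y ∈ Γ, y v = z v ∧ ∀ c, (∃ i, c i = 0) → y c = 0 := by
  cases nonempty_fintype ι
  suffices h : ∀ J : Finset ι, ∃ y ∈ Γ, y v = z v ∧
      (∀ c, (∀ i, c i = 0 ∨ c i = v i) → (∃ i, c i = 0) → y c = 0) ∧
      ∀ c, (∃ i ∈ J, c i = 0) → y c = 0 by
    obtain ⟨y, hy, hyv, -, hyJ⟩ := h Finset.univ
    exact ⟨y, hy, hyv, fun c ⟨i, hi⟩ => hyJ c ⟨i, Finset.mem_univ i, hi⟩⟩
  intro J
  induction J using Finset.induction_on with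
  | empty => exact ⟨z, hz, rfl, hzv, by simp⟩
  | insert j J _ ih =>
    obtain ⟨y, hy, hyv, hvertex, hface⟩ := ih
    have update_eq_zero {c : ι → M} {i : ι} (hi : c i = 0) : Function.update c j 0 i = 0 := by
      by_cases h : i = j
      · rw [h, Function.update_self]
      · rw [Function.update_of_ne h, hi]
    have update_vertex {c : ι → M} (hc : ∀ i, c i = 0 ∨ c i = v i) :
        y (Function.update c j 0) = 0 := by
      refine hvertex _ (fun i => ?_) ⟨j, Function.update_self ..⟩
      by_cases h : i = j
      · exact .inl (by rw [h, Function.update_self])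
      · rw [Function.update_of_ne h]
        exact hc i
    refine ⟨_, Γ.sub_mem hy (hΓ y hy j), ?_, fun c hc hc0 => ?_, ?_⟩
    · rw [Pi.sub_apply, update_vertex fun _ => .inr rfl, sub_zero, hyv]
    · rw [Pi.sub_apply, hvertex c hc hc0, update_vertex hc, sub_zero]
    · rintro c ⟨i, hi, hci⟩
      rw [Pi.sub_apply]
      rcases Finset.mem_insert.1 hi with rfl | hiJ
      · rw [Function.update_eq_self_iff.2 hci.symm, sub_self]
      · rw [hface c ⟨i, hiJ, hci⟩, hface _ ⟨i, hiJ, update_eq_zero hci⟩, sub_zero]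

lemma exists_mem_cubeFamilies_eq_zero_of_faces {ι : Type*} [Fintype ι] [Nontrivial ι]
    {w : MinimalIdempotent (Ultrafilter ℤ)} {z : (ι → ℤ) → LocalGroup w}
    (hz : z ∈ cubeFamilies ι w one_ne_zero)
    (hface : ∀ c, (∀ i, c i = 0 ∨ c i = 1) → (∃ i, c i = 0) → z c = 0) {q : ℤ} (hq : q ≠ 0) :
    ∃ y ∈ cubeFamilies ι w hq, y (q • 1) = z 1 ∧ ∀ c, (∃ i, c i = 0) → y c = 0 := by
  classical
  have hzero : z 0 = 0 := hface 0 (fun _ => .inl rfl) ⟨Classical.arbitrary ι, rfl⟩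
  have hsingle (j : ι) : z (Pi.single j 1) = 0 := by
    obtain ⟨i, hij⟩ := exists_ne j
    refine hface _ (fun l => ?_) ⟨i, Pi.single_eq_of_ne hij 1⟩
    by_cases hl : l = j
    · exact .inr (by rw [hl, Pi.single_eq_same])
    · exact .inl (Pi.single_eq_of_ne hl 1)
  obtain ⟨y, hy, hyz⟩ := exists_mem_cubeFamilies_smul_eq hz hzero hsingle hq
  rw [← hyz]
  refine exists_mem_forall_eq_zero_of_faces (fun _ hx j => comp_update_zero_mem_cubeFamilies hx j)
    hy fun c hc hc0 => ?_
  have hdilate (i : ι) : ∃ e : ℤ, (e = 0 ∨ e = 1) ∧ c i = q * e :=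
    (hc i).elim (fun h => ⟨0, .inl rfl, by rw [h, mul_zero]⟩) fun h => ⟨1, .inr rfl, h⟩
  choose e he hce using hdilate
  obtain rfl : c = q • e := funext hce
  obtain ⟨i, hi⟩ := hc0
  rw [hyz, hface e he ⟨i, (mul_eq_zero.1 hi).resolve_left hq⟩]

lemma exists_sum_eq_natCast_of_zero_or_one {ι : Type*} [Fintype ι] {c : ι → ℤ}
    (hc : ∀ i, c i = 0 ∨ c i = 1) :
    ∃ t : ℕ, ∑ i, c i = t ∧ t ≤ Fintype.card ι ∧ ((∃ i, c i = 0) → t < Fintype.card ι) := by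
  classical
  refine ⟨(Finset.univ.filter fun i => c i = 1).card, ?_, Finset.card_filter_le _ _, ?_⟩
  · rw [Finset.natCast_card_filter]
    refine Finset.sum_congr rfl fun i _ => ?_
    rcases hc i with h | h <;> simp [h]
  · rintro ⟨i, hi⟩
    exact Finset.card_lt_card (Finset.filter_ssubset.2 ⟨i, Finset.mem_univ i, by simp [hi]⟩)

section Extension

variable {w : MinimalIdempotent (Ultrafilter ℤ)} {s : ℕ}

lemma exists_mem_cubeFamilies_one_eq {x : ℤ → LocalGroup w} (hx : x ∈ progFamilies w)
    {f : LocalGroup w} (hs : 1 ≤ s) (hxf : ∀ i : ℕ, i ≤ s → x i = i • f) :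
    ∃ z ∈ cubeFamilies (Fin (s + 1)) w one_ne_zero,
      (∀ c, (∀ i, c i = 0 ∨ c i = 1) → (∃ i, c i = 0) → z c = 0) ∧
      z 1 = x (s + 1 : ℕ) - (s + 1) • f := by
  let z (c : Fin (s + 1) → ℤ) : LocalGroup w :=
    x (c 0 + ∑ i : Fin s, c i.succ) - x (∑ i : Fin s, c i.succ) - x (c 0)
  have hz : z ∈ cubeFamilies (Fin (s + 1)) w one_ne_zero := by
    have h := sub_mem (sub_mem (comp_dotProduct_mem_cubeFamilies hx (1 : Fin (s + 1) → ℤ))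
      (comp_dotProduct_mem_cubeFamilies hx (Fin.cons 0 1)))
      (comp_dotProduct_mem_cubeFamilies hx (Fin.cons 1 0))
    simpa [z, dotProduct, Fin.sum_univ_succ, Pi.sub_def] using h
  have hx0 : x 0 = 0 := by simpa using hxf 0 (Nat.zero_le s)
  have hx1 : x 1 = f := by simpa using hxf 1 hs
  refine ⟨z, hz, fun c hc hc0 => ?_, ?_⟩
  · obtain ⟨t, ht, hts, hlt⟩ := exists_sum_eq_natCast_of_zero_or_one fun i : Fin s => hc i.succ
    rw [Fintype.card_fin] at hts hlt
    change x (c 0 + ∑ i : Fin s, c i.succ) - x (∑ i : Fin s, c i.succ) - x (c 0) = 0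
    rcases hc 0 with h | h
    · rw [h, zero_add, hx0, sub_self, sub_zero]
    · have htlt : t < s := hlt <| (Fin.exists_fin_succ.1 hc0).resolve_left (by simp [h])
      rw [h, ht, hx1, add_comm, ← Nat.cast_succ, hxf _ htlt, hxf _ hts, ← sub_add_eq_sub_sub_swap,
        ← succ_nsmul', sub_self]
  · change x (1 + ∑ _i : Fin s, (1 : ℤ)) - x (∑ _i : Fin s, (1 : ℤ)) - x 1 = _
    rw [Fin.sum_const, nsmul_one, hx1, hxf s le_rfl, ← sub_add_eq_sub_sub_swap, ← succ_nsmul',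
      add_comm, Nat.cast_succ]

-- The line through the dilated cube meets one coordinate hyperplane at each of the times
-- `0, …, s`, then the vertex opposite to the origin; `(s + 1)!` clears the denominators.
lemma exists_mem_progFamilies_eq_zero {z : (Fin (s + 1) → ℤ) → LocalGroup w}
    (hz : z ∈ cubeFamilies (Fin (s + 1)) w one_ne_zero) (hs : 1 ≤ s)
    (hface : ∀ c, (∀ i, c i = 0 ∨ c i = 1) → (∃ i, c i = 0) → z c = 0) :
    ∃ v ∈ progFamilies w, (∀ i : ℕ, i ≤ s → v i = 0) ∧ v (s + 1 : ℕ) = z 1 := by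
  have : Nontrivial (Fin (s + 1)) := Fin.nontrivial_iff_two_le.2 (by omega)
  obtain ⟨q, hq, hdvd⟩ : ∃ q : ℤ, q ≠ 0 ∧ ∀ j : Fin (s + 1), ((s + 1 - j : ℕ) : ℤ) ∣ q :=
    ⟨((s + 1).factorial : ℕ), by exact_mod_cast (s + 1).factorial_ne_zero, fun j => by
      exact_mod_cast Nat.dvd_factorial (by omega) (Nat.sub_le _ _)⟩
  obtain ⟨y, hy, hyz, hy0⟩ := exists_mem_cubeFamilies_eq_zero_of_faces hz hface hq
  choose b hb using hdvd
  refine ⟨_, comp_line_mem_progFamilies hy (fun j => -j * b j) b, fun i hi => ?_, ?_⟩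
  · exact hy0 _ ⟨⟨i, by omega⟩, by simp⟩
  · have hline : ((fun j => -j * b j) + ((s + 1 : ℕ) : ℤ) • b : Fin (s + 1) → ℤ) = q • 1 := by
      funext j
      have hbj := hb j
      rw [Nat.cast_sub (by omega)] at hbj
      simp only [Pi.add_apply, Pi.smul_apply, smul_eq_mul, Pi.one_apply]
      linarith
    rw [hline, hyz]

lemma exists_mem_progFamilies_one_eq (f : LocalGroup w) :
    ∃ x ∈ progFamilies w, x 0 = 0 ∧ x 1 = f := by
  refine ⟨_, sandwich_mem_realizable _ ((f : Ultrafilter ℤ).map fun n => (0, n)), ?_, ?_⟩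
  · have hzero : progForm 0 ∘ (fun n : ℤ => ((0 : ℤ), n)) = fun _ => 0 := by
      funext n
      simp [progForm_apply]
    have hpure : (f : Ultrafilter ℤ).map (fun _ => (0 : ℤ)) = pure 0 :=
      Ultrafilter.coe_injective Filter.map_const
    refine Subtype.ext ?_
    change (w : Ultrafilter ℤ) + Ultrafilter.map (progForm 0) (Ultrafilter.map _ _) + w = w
    rw [Ultrafilter.map_map, hzero, hpure, ultrafilter_add_pure_zero, w.add_self]
  · have hid : progForm 1 ∘ (fun n : ℤ => ((0 : ℤ), n)) = id := by
      funext n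
      simp [progForm_apply]
    rw [Ultrafilter.map_map, hid, Ultrafilter.map_id, LocalGroup.sandwich_coe]

theorem exists_mem_progFamilies_nsmul (f : LocalGroup w) (s : ℕ) :
    ∃ x ∈ progFamilies w, ∀ i : ℕ, i ≤ s → x i = i • f := by
  induction s with
  | zero =>
    exact ⟨0, zero_mem _, fun i hi => by rw [Nat.le_zero.1 hi, zero_nsmul, Pi.zero_apply]⟩
  | succ s ih =>
    rcases Nat.eq_zero_or_pos s with rfl | hs
    · obtain ⟨x, hx, hx0, hx1⟩ := exists_mem_progFamilies_one_eq f
      refine ⟨x, hx, fun i hi => ?_⟩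
      interval_cases i
      · simpa using hx0
      · simpa using hx1
    obtain ⟨x, hx, hxf⟩ := ih
    obtain ⟨z, hz, hface, hz1⟩ := exists_mem_cubeFamilies_one_eq hx hs hxf
    obtain ⟨v, hv, hv0, hv1⟩ := exists_mem_progFamilies_eq_zero hz hs hface
    refine ⟨-v + x, add_mem (neg_mem hv) hx, fun i hi => ?_⟩
    rw [Pi.add_apply, Pi.neg_apply]
    rcases Nat.le_succ_iff.1 hi with his | rfl
    · rw [hv0 i his, hxf i his, neg_zero, zero_add]
    · rw [hv1, hz1, neg_sub, sub_add_cancel]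

end Extension

/-! ### Orbits along ultrafilters -/

/-- Minimality of the system given by a bijection `T`: every two-sided orbit is dense. -/
def HasDenseOrbits {X : Type*} [TopologicalSpace X] (T : Equiv.Perm X) : Prop :=
  ∀ x : X, Dense (Set.range fun n : ℤ => (T ^ n) x)

section Perm

variable {X : Type*} (T : Equiv.Perm X)

lemma perm_zpow_add_apply (m n : ℤ) (x : X) : (T ^ (m + n)) x = (T ^ m) ((T ^ n) x) := by
  rw [zpow_add, Equiv.Perm.mul_apply]

lemma perm_pow_zpow_apply (k : ℕ) (n : ℤ) (x : X) : ((T ^ k) ^ n) x = (T ^ (k * n : ℤ)) x := by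
  rw [zpow_mul, zpow_natCast]

lemma HasDenseOrbits.of_pow [TopologicalSpace X] {T : Equiv.Perm X} {k : ℕ}
    (h : HasDenseOrbits (T ^ k)) : HasDenseOrbits T := fun x =>
  (h x).mono <| by
    rintro _ ⟨n, rfl⟩
    exact ⟨k * n, (perm_pow_zpow_apply T k n x).symm⟩

end Perm

section OrbitLim

variable {X : Type*} [TopologicalSpace X] {T : X ≃ₜ X}

lemma coe_homeomorph_zpow (T : X ≃ₜ X) (n : ℤ) : ⇑(T ^ n) = ⇑(T.toEquiv ^ n) :=
  congrArg DFunLike.coe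
    (map_zpow (MonoidHom.mk' Homeomorph.toEquiv fun _ _ => rfl : (X ≃ₜ X) →* Equiv.Perm X) T n)

lemma continuous_toEquiv_zpow (T : X ≃ₜ X) (n : ℤ) : Continuous ⇑(T.toEquiv ^ n) :=
  coe_homeomorph_zpow T n ▸ (T ^ n).continuous

/-- The orbit of `x` converges to `y` along the ultrafilter `U` on the group of times. -/
def OrbitLim (T : X ≃ₜ X) (U : Ultrafilter ℤ) (x y : X) : Prop :=
  Tendsto (fun n : ℤ => (T.toEquiv ^ n) x) U (𝓝 y)

lemma OrbitLim.add {U V : Ultrafilter ℤ} {x y z : X} (hV : OrbitLim T V x y)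
    (hU : OrbitLim T U y z) : OrbitLim T (U + V) x z := by
  refine tendsto_nhds.2 fun s hs hz => ?_
  change ∀ᶠ n in ((U + V : Ultrafilter ℤ) : Filter ℤ), (T.toEquiv ^ n) x ∈ s
  rw [Ultrafilter.eventually_add]
  filter_upwards [tendsto_nhds.1 hU s hs hz] with m hm
  filter_upwards [tendsto_nhds.1 hV _ (hs.preimage (continuous_toEquiv_zpow T m)) hm] with n hn
  rwa [perm_zpow_add_apply]

lemma exists_orbitLim [CompactSpace X] (U : Ultrafilter ℤ) (x : X) : ∃ y, OrbitLim T U x y :=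
  ⟨_, (U.map fun n : ℤ => (T.toEquiv ^ n) x).le_nhds_lim⟩

lemma exists_orbitLim_of_mem_closure {x y : X} {P : Set ℤ}
    (h : y ∈ closure ((fun n : ℤ => (T.toEquiv ^ n) x) '' P)) :
    ∃ U : Ultrafilter ℤ, (∀ᶠ n in (U : Filter ℤ), n ∈ P) ∧ OrbitLim T U x y := by
  obtain ⟨V, himage, hV⟩ := mem_closure_iff_ultrafilter.1 h
  refine ⟨_, Ultrafilter.ofComapInfPrincipal_mem himage, ?_⟩
  rw [OrbitLim, Tendsto, ← Ultrafilter.coe_map, Ultrafilter.ofComapInfPrincipal_eq_of_map]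
  exact hV

lemma isClosed_setOf_orbitLim (T : X ≃ₜ X) (x y : X) : IsClosed {U | OrbitLim T U x y} := by
  have heq : {U | OrbitLim T U x y} =
      ⋂ s ∈ 𝓝 y, {U : Ultrafilter ℤ | (fun n : ℤ => (T.toEquiv ^ n) x) ⁻¹' s ∈ U} := by
    ext U
    simp only [Set.mem_iInter]
    rfl
  rw [heq]
  exact isClosed_biInter fun s _ => ultrafilter_isClosed_basic _

lemma exists_minimalIdempotent_orbitLim [CompactSpace X] (hT : HasDenseOrbits T.toEquiv) (x : X) :
    ∃ w : MinimalIdempotent (Ultrafilter ℤ), OrbitLim T w x x := by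
  refine exists_minimalIdempotent_mem Ultrafilter.continuous_add_left
    (isClosed_setOf_orbitLim T x x) (fun U hU V hV => OrbitLim.add hV hU) fun U => ?_
  obtain ⟨y, hy⟩ := exists_orbitLim (T := T) U x
  obtain ⟨V, -, hV⟩ := exists_orbitLim_of_mem_closure (T := T) (P := Set.univ)
    (by rw [Set.image_univ]; exact hT y x)
  exact ⟨V, hy.add hV⟩

lemma eventually_modEq_sandwich (w : MinimalIdempotent (Ultrafilter ℤ)) {U : Ultrafilter ℤ}
    {m q : ℤ} (hq : q ≠ 0) (hU : ∀ᶠ n in (U : Filter ℤ), n ≡ m [ZMOD q]) :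
    ∀ᶠ n in ((LocalGroup.sandwich w U : Ultrafilter ℤ) : Filter ℤ), n ≡ m [ZMOD q] := by
  change ∀ᶠ n in ((w + U + w : Ultrafilter ℤ) : Filter ℤ), n ≡ m [ZMOD q]
  have hw := eventually_dvd_of_add_self w.add_self hq
  rw [Ultrafilter.eventually_add, Ultrafilter.eventually_add]
  filter_upwards [hw] with a ha
  filter_upwards [hU] with b hb
  filter_upwards [hw] with c hc
  simpa using (ha.modEq_zero_int.add hb).add hc.modEq_zero_int

lemma exists_localGroup_orbitLim [CompactSpace X] {k : ℕ} (hk : k ≠ 0)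
    (hTk : HasDenseOrbits (T.toEquiv ^ k)) (x : X) (m : ℤ) :
    ∃ (w : MinimalIdempotent (Ultrafilter ℤ)) (f : LocalGroup w), OrbitLim T w x x ∧
      OrbitLim T f x x ∧ ∀ᶠ n in ((f : Ultrafilter ℤ) : Filter ℤ), n ≡ m [ZMOD k] := by
  obtain ⟨w, hw⟩ := exists_minimalIdempotent_orbitLim hTk.of_pow x
  obtain ⟨U, hUm, hU⟩ := exists_orbitLim_of_mem_closure (T := T) (P := {n | n ≡ m [ZMOD k]})
    (x := x) (y := x) <| closure_mono (by
      rintro _ ⟨n, rfl⟩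
      refine ⟨k * n + m, by simp [Int.ModEq], ?_⟩
      simp only [perm_zpow_add_apply, perm_pow_zpow_apply]) (hTk ((T.toEquiv ^ m) x) x)
  exact ⟨w, .sandwich w U, hw, hw.add (hU.add hw),
    eventually_modEq_sandwich w (Nat.cast_ne_zero.2 hk) hUm⟩

lemma OrbitLim.nsmul {w : MinimalIdempotent (Ultrafilter ℤ)} {f : LocalGroup w} {x : X}
    (hw : OrbitLim T w x x) (hf : OrbitLim T f x x) (i : ℕ) :
    OrbitLim T (i • f : LocalGroup w) x x := by
  induction i with
  | zero => rwa [zero_nsmul]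
  | succ i ih =>
    rw [succ_nsmul]
    exact hf.add ih

theorem const_mem_closure_progressions [CompactSpace X] {k : ℕ} (hk : k ≠ 0)
    (hTk : HasDenseOrbits (T.toEquiv ^ k)) (x : X) (m : ℤ) (d : ℕ) :
    (fun _ => x) ∈ closure {g : Fin d → X | ∃ a n : ℤ, n ≡ m [ZMOD k] ∧
      ∀ i : Fin d, g i = (T.toEquiv ^ (a + ((i : ℕ) + 1) * n)) x} := by
  obtain ⟨w, f, hw, hf, hfm⟩ := exists_localGroup_orbitLim hk hTk x m
  obtain ⟨g, ⟨W, hW⟩, hgf⟩ := exists_mem_progFamilies_nsmul f (d + 1)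
  have hWf (i : ℕ) (hi : i ≤ d + 1) : W.map (progForm i) = (i • f : LocalGroup w) := by
    rw [hW, hgf i hi]
  refine mem_closure_of_tendsto (b := (W : Filter (ℤ × ℤ)))
    (f := fun p (i : Fin d) => (T.toEquiv ^ progForm ((i + 1 : ℕ) : ℤ) p) x)
    (tendsto_pi_nhds.2 fun i => ?_) ?_
  · have hlim := hw.nsmul hf (i + 1)
    rw [← hWf _ (by omega)] at hlim
    exact tendsto_map'_iff.1 hlim
  · have hdvd : ∀ᶠ n in (W.map (progForm (0 : ℕ)) : Filter ℤ), (k : ℤ) ∣ n := by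
      rw [hWf 0 (by omega), zero_nsmul]
      exact eventually_dvd_of_add_self w.add_self (Nat.cast_ne_zero.2 hk)
    have hmod : ∀ᶠ n in (W.map (progForm (1 : ℕ)) : Filter ℤ), n ≡ m [ZMOD k] := by
      rwa [hWf 1 (by omega), one_nsmul]
    filter_upwards [eventually_map.1 hdvd, eventually_map.1 hmod] with p hp hpm
    refine ⟨p.1, p.2, ?_, fun i => by rw [progForm_apply, Nat.cast_succ]⟩
    simpa [progForm_apply] using hpm.sub hp.modEq_zero_int

end OrbitLim

/-! ### Powers of minimal homeomorphisms -/

section Nd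

variable {X : Type*} [MetricSpace X]

lemma Nd_pow_subset_Nd (T : Equiv.Perm X) (k d : ℕ) : Nd (T ^ k) d ⊆ Nd T d := by
  refine closure_mono ?_
  rintro g ⟨x, n, hg⟩
  exact ⟨x, k * n, fun i => by rw [hg, perm_pow_zpow_apply, mul_left_comm]⟩

-- A progression of step `n` becomes one of step `n + n₀`, divisible by `k`, when its `i`-th
-- coordinate is moved by the power `i * n₀` of `T`.
lemma Nd_subset_Nd_pow [CompactSpace X] {T : X ≃ₜ X} {k : ℕ} (hk : k ≠ 0)
    (hTk : HasDenseOrbits (T.toEquiv ^ k)) (d : ℕ) : Nd T.toEquiv d ⊆ Nd (T.toEquiv ^ k) d := by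
  refine closure_minimal ?_ isClosed_closure
  rintro g ⟨x, n₀, hg⟩
  let shift (z : Fin d → X) (i : Fin d) : X := (T.toEquiv ^ (((i : ℕ) + 1 : ℤ) * n₀)) (z i)
  have hshift : Continuous shift :=
    continuous_pi fun i => (continuous_toEquiv_zpow T _).comp (continuous_apply i)
  rw [show g = shift fun _ => x from funext hg]
  refine map_mem_closure hshift (const_mem_closure_progressions hk hTk x (-n₀) d) ?_
  rintro z ⟨a, n, hn, hz⟩
  obtain ⟨r, hr⟩ := hn.symm.dvd
  refine ⟨(T.toEquiv ^ a) x, r, fun i => ?_⟩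
  change (T.toEquiv ^ (((i : ℕ) + 1 : ℤ) * n₀)) (z i) = _
  rw [hz, perm_pow_zpow_apply, ← perm_zpow_add_apply, ← perm_zpow_add_apply]
  congr 2
  linear_combination ((i : ℕ) + 1 : ℤ) * hr

lemma zpow_apply_mem_of_mem_interior {T : Equiv.Perm X} {k : ℕ} (hNd : Nd T 2 ⊆ Nd (T ^ k) 2)
    {A : Set X} (hA : IsClosed A) (hinv : ∀ n : ℤ, ∀ y ∈ A, ((T ^ k) ^ n) y ∈ A) {z : X}
    (hz : z ∈ interior A) (n : ℤ) : (T ^ n) z ∈ A := by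
  have hclosed : IsClosed {g : Fin 2 → X | g 0 ∈ interior A → g 1 ∈ A} :=
    isClosed_imp (isOpen_interior.preimage (continuous_apply 0)) (hA.preimage (continuous_apply 1))
  have hsub : Nd (T ^ k) 2 ⊆ {g | g 0 ∈ interior A → g 1 ∈ A} := by
    refine closure_minimal ?_ hclosed
    rintro g ⟨y, r, hg⟩ hg0
    have hstep : g 1 = ((T ^ k) ^ r) (g 0) := by
      rw [hg, hg, ← perm_zpow_add_apply]
      congr 2
      simp only [Fin.val_one, Fin.val_zero]
      ring
    rw [hstep]
    exact hinv r _ (interior_subset hg0)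
  have hmem : ![z, (T ^ n) z] ∈ Nd T 2 := subset_closure
    ⟨(T ^ (-n)) z, n, Fin.forall_fin_two.2 ⟨by simp, by
      rw [← perm_zpow_add_apply, Fin.val_one, Nat.cast_one, add_mul, one_mul, add_neg_cancel_right]
      rfl⟩⟩
  exact hsub (hNd hmem) hz

lemma interior_closure_pow_orbit_nonempty [BaireSpace X] {T : X ≃ₜ X}
    (hT : HasDenseOrbits T.toEquiv) {k : ℕ} (hk : k ≠ 0) (x : X) :
    (interior (closure (Set.range fun n : ℤ => ((T.toEquiv ^ k) ^ n) x))).Nonempty := by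
  set A := closure (Set.range fun n : ℤ => ((T.toEquiv ^ k) ^ n) x)
  let translate (i : Fin k) : Set X := ⇑(T ^ (-(i : ℕ) : ℤ)) ⁻¹' A
  have hclosed (i : Fin k) : IsClosed (translate i) :=
    isClosed_closure.preimage (T ^ (-(i : ℕ) : ℤ)).continuous
  have hcover : ⋃ i, translate i = Set.univ := by
    rw [← (isClosed_iUnion_of_finite hclosed).closure_eq]
    refine ((hT x).mono ?_).closure_eq
    rintro _ ⟨n, rfl⟩
    have hkpos : (0 : ℤ) < k := by exact_mod_cast Nat.pos_of_ne_zero hk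
    have hnonneg := Int.emod_nonneg n hkpos.ne'
    have hlt := Int.emod_lt_of_pos n hkpos
    obtain ⟨i, hi⟩ : ∃ i : Fin k, ((i : ℕ) : ℤ) = n % k :=
      ⟨⟨(n % k).toNat, by omega⟩, Int.toNat_of_nonneg hnonneg⟩
    refine Set.mem_iUnion.2 ⟨i, subset_closure ⟨n / k, ?_⟩⟩
    simp only [coe_homeomorph_zpow, perm_pow_zpow_apply, ← perm_zpow_add_apply]
    congr 2
    linarith [Int.emod_add_mul_ediv n k]
  have : Nonempty X := ⟨x⟩
  obtain ⟨i, y, hy⟩ := nonempty_interior_of_iUnion_of_closed hclosed hcover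
  rw [← Homeomorph.preimage_interior] at hy
  exact ⟨_, hy⟩

lemma hasDenseOrbits_pow_of_Nd_two_subset [BaireSpace X] {T : X ≃ₜ X}
    (hT : HasDenseOrbits T.toEquiv) {k : ℕ} (hk : k ≠ 0)
    (hNd : Nd T.toEquiv 2 ⊆ Nd (T.toEquiv ^ k) 2) : HasDenseOrbits (T.toEquiv ^ k) := by
  intro x
  set A := closure (Set.range fun n : ℤ => ((T.toEquiv ^ k) ^ n) x)
  have hinv (n : ℤ) (y : X) (hy : y ∈ A) : ((T.toEquiv ^ k) ^ n) y ∈ A := by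
    rw [perm_pow_zpow_apply]
    refine map_mem_closure (continuous_toEquiv_zpow T (k * n)) hy ?_
    rintro _ ⟨m, rfl⟩
    exact ⟨n + m, by simp only [← perm_pow_zpow_apply, perm_zpow_add_apply]⟩
  obtain ⟨z, hz⟩ := interior_closure_pow_orbit_nonempty hT hk x
  have horbit : Set.range (fun n : ℤ => (T.toEquiv ^ n) z) ⊆ A := by
    rintro _ ⟨n, rfl⟩
    exact zpow_apply_mem_of_mem_interior hNd isClosed_closure hinv hz n
  exact dense_closure.1 ((hT z).mono horbit)

end Nd

/-- Let `(X,T)` be a minimal system and `k ≥ 2` an integer. Then `(X,T^k)` is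
minimal iff `N_d(X,T) = N_d(X,T^k)` for each `d ∈ ℕ`. -/
theorem power_minimal_iff_nd_eq
    {X : Type*} [MetricSpace X] [CompactSpace X] (T : X ≃ₜ X)
    (hTmin : ∀ x : X, Dense (Set.range fun n : ℤ => (T.toEquiv ^ n) x))
    (k : ℕ) (hk : 2 ≤ k) :
    (∀ x : X, Dense (Set.range fun n : ℤ => ((T.toEquiv ^ k) ^ n) x)) ↔
    (∀ d : ℕ, Nd T.toEquiv d = Nd (T.toEquiv ^ k) d) := by
  have hk0 : k ≠ 0 := by omega
  exact ⟨fun hTk d => (Nd_subset_Nd_pow hk0 hTk d).antisymm (Nd_pow_subset_Nd _ k d),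
    fun hNd => hasDenseOrbits_pow_of_Nd_two_subset hTmin hk0 (hNd 2).subset⟩
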